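/- If p − q ≢ 1 (mod 4), then Cl_{p,q} is a simple ℝ-algebra of dimension 2^{p+q} isomorphic to the full matrix algebra Mat(2^k, 𝕂) with k = q − r_{q−p}, where 𝕂 = ℝ if p − q ≡ 0 or 2 (mod 8), 𝕂 = ℂ if p − q ≡ 3 or 7 (mod 8), and 𝕂 = ℍ if p − q ≡ 4 or 6 (mod 8). -/

import Mathlib

noncomputable section

/-- The quadratic form of signature `(p,q)` on `ℝ^(p+q)`. -/
def Qpq (p q : ℕ) : QuadraticForm ℝ (Fin (p + q) → ℝ) :=
  QuadraticMap.weightedSumSquares ℝ (fun i : Fin (p + q) => if (i : ℕ) < p then (1 : ℝ) else -1)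

/-- The real Clifford algebra `Cl_{p,q}`. -/
abbrev Cl (p q : ℕ) : Type := CliffordAlgebra (Qpq p q)

/-- The generators `e i` of `Cl_{p,q}`. -/
def gen (p q : ℕ) (i : Fin (p + q)) : Cl p q :=
  CliffordAlgebra.ι (Qpq p q) (Pi.single i 1)

/-- The values of the Radon–Hurwitz numbers `r_0,…,r_7`. -/
def rhBase : ℕ → ℤ
  | 0 => 0
  | 1 => 1
  | 2 => 2
  | 3 => 2
  | _ => 3

/-- The Radon–Hurwitz number `r_i` (`r_0 = 0`, `r_1 = 1`, `r_2 = r_3 = 2`,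
`r_4 = r_5 = r_6 = r_7 = 3`), extended to all integers by `r_{i+8} = r_i + 4`. -/
def radonHurwitz (i : ℤ) : ℤ := 4 * ((i - i % 8) / 8) + rhBase (i % 8).toNat

open scoped TensorProduct
open QuadraticMap Quaternion

section DiagonalForm

variable {ι κ : Type} [Fintype ι] [Fintype κ]

theorem finrank_cliffordAlgebra_weightedSumSquares (w : ι → ℝ) :
    Module.finrank ℝ (CliffordAlgebra (weightedSumSquares ℝ w)) = 2 ^ Fintype.card ι := by
  let b := ((Pi.basisFun ℝ ι).reindex (Fintype.equivFin ι)).ExteriorAlgebra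
  rw [(CliffordAlgebra.equivExterior _).finrank_eq, Module.finrank_eq_card_basis b]
  simp

instance finite_cliffordAlgebra_weightedSumSquares (w : ι → ℝ) :
    Module.Finite ℝ (CliffordAlgebra (weightedSumSquares ℝ w)) :=
  Module.finite_of_finrank_pos
    (by rw [finrank_cliffordAlgebra_weightedSumSquares]; positivity)

theorem nonempty_cliffordAlgebra_congr_index {w : ι → ℝ} {w' : κ → ℝ} (e : ι ≃ κ)
    (h : ∀ i, w' (e i) = w i) :
    Nonempty (CliffordAlgebra (weightedSumSquares ℝ w) ≃ₐ[ℝ]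
      CliffordAlgebra (weightedSumSquares ℝ w')) := by
  refine ⟨CliffordAlgebra.equivOfIsometry
    { LinearEquiv.funCongrLeft ℝ ℝ e.symm with map_app' := fun v => ?_ }⟩
  simp only [weightedSumSquares_apply]
  rw [← e.sum_comp]
  simp [h, LinearMap.funLeft_apply]

/-- An algebra generated by anticommuting `i`, `j` with `i² = a`, `j² = b` absorbs two
generators of a Clifford algebra, twisting the remaining weights by `-ab`. -/
theorem nonempty_cliffordAlgebra_tensorProduct (w : ι → ℝ) {B : Type} [Ring B] [Algebra ℝ B]
    [Module.Finite ℝ B] (i j : B) {a b : ℝ} (hi : i * i = a • 1) (hj : j * j = b • 1)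
    (hij : i * j = -(j * i)) (hab : a * b ≠ 0)
    (hgen : ∀ x : B, ∃ r s t u : ℝ, x = r • 1 + s • i + t • j + u • (i * j))
    (hB : Module.finrank ℝ B = 4) :
    Nonempty (CliffordAlgebra (weightedSumSquares ℝ (Sum.elim (fun x => -(a * b) * w x) ![a, b]))
      ≃ₐ[ℝ] CliffordAlgebra (weightedSumSquares ℝ w) ⊗[ℝ] B) := by
  set Q := weightedSumSquares ℝ w
  set Q' := weightedSumSquares ℝ (Sum.elim (fun x => -(a * b) * w x) ![a, b])
  have hji : j * i = -(i * j) := by rw [hij, neg_neg]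
  have hki : i * j * i = -(a • j) := by
    rw [mul_assoc, hji, mul_neg, ← mul_assoc, hi, smul_mul_assoc, one_mul]
  have hik : i * (i * j) = a • j := by rw [← mul_assoc, hi, smul_mul_assoc, one_mul]
  have hkj : i * j * j = b • i := by rw [mul_assoc, hj, mul_smul_comm, mul_one]
  have hjk : j * (i * j) = -(b • i) := by
    rw [← mul_assoc, hji, neg_mul, hkj]
  have hkk : i * j * (i * j) = -(a * b) • (1 : B) := by
    rw [← mul_assoc, hki, neg_mul, smul_mul_assoc, hj, smul_smul, neg_smul]
  let f : (ι ⊕ Fin 2 → ℝ) →ₗ[ℝ] CliffordAlgebra Q ⊗[ℝ] B :=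
    ((TensorProduct.mk ℝ _ B).flip (i * j)) ∘ₗ CliffordAlgebra.ι Q ∘ₗ
        LinearMap.funLeft ℝ ℝ Sum.inl
      + (LinearMap.proj (Sum.inr 0)).smulRight (1 ⊗ₜ i)
      + (LinearMap.proj (Sum.inr 1)).smulRight (1 ⊗ₜ j)
  have hf (v) : f v = CliffordAlgebra.ι Q (v ∘ Sum.inl) ⊗ₜ (i * j)
      + v (Sum.inr 0) • (1 ⊗ₜ i) + v (Sum.inr 1) • (1 ⊗ₜ j) := rfl
  have hsq (v) : f v * f v = algebraMap _ _ (Q' v) := by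
    have hQ : Q' v = -(a * b) * Q (v ∘ Sum.inl) + a * (v (Sum.inr 0) * v (Sum.inr 0))
        + b * (v (Sum.inr 1) * v (Sum.inr 1)) := by
      simp [Q, Q', weightedSumSquares_apply, Finset.mul_sum, mul_assoc, add_assoc]
    rw [hf, hQ]
    simp only [add_mul, mul_add, smul_mul_assoc, mul_smul_comm,
      Algebra.TensorProduct.tmul_mul_tmul, CliffordAlgebra.ι_sq_scalar, one_mul, mul_one, hi, hj,
      hki, hik, hkj, hjk, hkk, hji, TensorProduct.tmul_smul, TensorProduct.tmul_neg,
      Algebra.algebraMap_eq_smul_one, TensorProduct.smul_tmul', smul_smul,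
      Algebra.TensorProduct.one_def]
    simp only [← TensorProduct.smul_tmul']
    module
  let F := CliffordAlgebra.lift Q' ⟨f, hsq⟩
  have hF (v) : f v ∈ F.range := ⟨CliffordAlgebra.ι Q' v, CliffordAlgebra.lift_ι_apply _ _ _⟩
  have h_i : (1 : CliffordAlgebra Q) ⊗ₜ[ℝ] i ∈ F.range := by
    have := hF (Sum.elim 0 (Pi.single 0 1))
    rw [hf] at this
    have h0 : (Sum.elim 0 (Pi.single 0 1) : ι ⊕ Fin 2 → ℝ) ∘ Sum.inl = 0 := by ext; simp
    simpa [h0] using this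
  have h_j : (1 : CliffordAlgebra Q) ⊗ₜ[ℝ] j ∈ F.range := by
    have := hF (Sum.elim 0 (Pi.single 1 1))
    rw [hf] at this
    have h0 : (Sum.elim 0 (Pi.single 1 1) : ι ⊕ Fin 2 → ℝ) ∘ Sum.inl = 0 := by ext; simp
    simpa [h0] using this
  have hright (y : B) : (1 : CliffordAlgebra Q) ⊗ₜ[ℝ] y ∈ F.range := by
    obtain ⟨r, s, t, u, rfl⟩ := hgen y
    have h_ij := mul_mem h_i h_j
    rw [Algebra.TensorProduct.tmul_mul_tmul, one_mul] at h_ij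
    simp only [TensorProduct.tmul_add, TensorProduct.tmul_smul]
    exact add_mem (add_mem (add_mem (Subalgebra.smul_mem _ (one_mem _) _)
      (Subalgebra.smul_mem _ h_i _)) (Subalgebra.smul_mem _ h_j _)) (Subalgebra.smul_mem _ h_ij _)
  have hleft (x : CliffordAlgebra Q) : x ⊗ₜ[ℝ] (1 : B) ∈ F.range := by
    induction x using CliffordAlgebra.induction with
    | algebraMap r =>
      rw [Algebra.algebraMap_eq_smul_one, ← TensorProduct.smul_tmul']
      exact Subalgebra.smul_mem _ (one_mem _) _
    | add x y hx hy => rw [TensorProduct.add_tmul]; exact add_mem hx hy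
    | mul x y hx hy =>
      have := mul_mem hx hy
      rwa [Algebra.TensorProduct.tmul_mul_tmul, one_mul] at this
    | ι x =>
      have h1 := hF (Sum.elim x 0)
      have h0 : (Sum.elim x 0 : ι ⊕ Fin 2 → ℝ) ∘ Sum.inl = x := by ext; simp
      simp only [hf, h0, Sum.elim_inr, Pi.zero_apply, zero_smul, add_zero] at h1
      have h2 := Subalgebra.smul_mem _ (mul_mem h1 (hright (i * j))) (-(a * b))⁻¹
      rwa [Algebra.TensorProduct.tmul_mul_tmul, mul_one, hkk, TensorProduct.tmul_smul, smul_smul,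
        inv_mul_cancel₀ (neg_ne_zero.2 hab), one_smul] at h2
  have hsurj : Function.Surjective F := by
    intro z
    change z ∈ F.range
    induction z with
    | zero => exact zero_mem _
    | add x y hx hy => exact add_mem hx hy
    | tmul x y =>
      have := mul_mem (hleft x) (hright y)
      rwa [Algebra.TensorProduct.tmul_mul_tmul, one_mul, mul_one] at this
  have hdim : Module.finrank ℝ (CliffordAlgebra Q') =
      Module.finrank ℝ (CliffordAlgebra Q ⊗[ℝ] B) := by
    rw [Module.finrank_tensorProduct, hB, finrank_cliffordAlgebra_weightedSumSquares,
      finrank_cliffordAlgebra_weightedSumSquares]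
    simp [pow_add]
  exact ⟨AlgEquiv.ofBijective F ⟨(LinearMap.injective_iff_surjective_of_finrank_eq_finrank
    (f := F.toLinearMap) hdim).2 hsurj, hsurj⟩⟩

end DiagonalForm

theorem finrank_Cl (p q : ℕ) : Module.finrank ℝ (Cl p q) = 2 ^ (p + q) :=
  (finrank_cliffordAlgebra_weightedSumSquares _).trans (by simp)

instance finite_Cl (p q : ℕ) : Module.Finite ℝ (Cl p q) :=
  finite_cliffordAlgebra_weightedSumSquares _

/-- The weights of the form of signature `(p,q)`, indexed by a disjoint union. -/
def signWeights (p q : ℕ) : Fin p ⊕ Fin q → ℝ :=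
  Sum.elim (fun _ => 1) (fun _ => -1)

@[simp] theorem signWeights_inl (p q : ℕ) (i : Fin p) : signWeights p q (Sum.inl i) = 1 := rfl

@[simp] theorem signWeights_inr (p q : ℕ) (i : Fin q) : signWeights p q (Sum.inr i) = -1 := rfl

theorem nonempty_Cl_equiv {p q : ℕ} {κ : Type} [Fintype κ] {w : κ → ℝ}
    (e : Fin p ⊕ Fin q ≃ κ) (h : ∀ i, w (e i) = signWeights p q i) :
    Nonempty (Cl p q ≃ₐ[ℝ] CliffordAlgebra (weightedSumSquares ℝ w)) := by
  refine nonempty_cliffordAlgebra_congr_index (finSumFinEquiv.symm.trans e) fun i => ?_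
  obtain ⟨i | i, rfl⟩ := finSumFinEquiv.surjective i <;> simp [h]

section TwoGenerators

variable {B : Type} [Ring B] [Algebra ℝ B] [Module.Finite ℝ B]

theorem nonempty_Cl_tensorProduct {p q p' q' : ℕ} {i j : B} {a b : ℝ} (hi : i * i = a • 1)
    (hj : j * j = b • 1) (hij : i * j = -(j * i)) (hab : a * b ≠ 0)
    (hgen : ∀ x : B, ∃ r s t u : ℝ, x = r • 1 + s • i + t • j + u • (i * j))
    (hB : Module.finrank ℝ B = 4) (e : Fin p' ⊕ Fin q' ≃ (Fin p ⊕ Fin q) ⊕ Fin 2)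
    (he : ∀ x, Sum.elim (fun x => -(a * b) * signWeights p q x) ![a, b] (e x) =
      signWeights p' q' x) :
    Nonempty (Cl p' q' ≃ₐ[ℝ] Cl p q ⊗[ℝ] B) := by
  obtain ⟨f⟩ := nonempty_Cl_equiv (p := p) (q := q) (w := signWeights p q) (Equiv.refl _)
    fun _ => rfl
  obtain ⟨g⟩ := nonempty_Cl_equiv e he
  obtain ⟨k⟩ := nonempty_cliffordAlgebra_tensorProduct (signWeights p q) i j hi hj hij hab hgen hB
  exact ⟨(g.trans k).trans (Algebra.TensorProduct.congr f.symm AlgEquiv.refl)⟩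

end TwoGenerators

theorem nonempty_Cl_succ_succ (p q : ℕ) :
    Nonempty (Cl (p + 1) (q + 1) ≃ₐ[ℝ] Cl p q ⊗[ℝ] Matrix (Fin 2) (Fin 2) ℝ) := by
  refine nonempty_Cl_tensorProduct (i := !![1, 0; 0, -1]) (j := !![0, 1; -1, 0]) (a := 1)
    (b := -1) ?_ ?_ ?_ (by norm_num) (fun x => ⟨(x 0 0 + x 1 1) / 2, (x 0 0 - x 1 1) / 2,
      (x 0 1 - x 1 0) / 2, (x 0 1 + x 1 0) / 2, ?_⟩) (by simp [Module.finrank_matrix])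
    ((Equiv.sumCongr finSumFinEquiv.symm finSumFinEquiv.symm).trans
      ((Equiv.sumSumSumComm _ _ _ _).trans (Equiv.sumCongr (Equiv.refl _) finSumFinEquiv))) ?_
  · ext i j; fin_cases i <;> fin_cases j <;> simp
  · ext i j; fin_cases i <;> fin_cases j <;> simp
  · ext i j; fin_cases i <;> fin_cases j <;> simp
  · ext i j; fin_cases i <;> fin_cases j <;> simp <;> ring
  · rintro (x | x) <;> obtain ⟨x | x, rfl⟩ := finSumFinEquiv.surjective x
    · simp
    · obtain rfl := Subsingleton.elim x 0
      simp [show finSumFinEquiv (Sum.inl 0 : Fin 1 ⊕ Fin 1) = 0 from rfl]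
    · simp
    · obtain rfl := Subsingleton.elim x 0
      simp [show finSumFinEquiv (Sum.inr 0 : Fin 1 ⊕ Fin 1) = 1 from rfl]

theorem nonempty_Cl_add_two_left (p q : ℕ) :
    Nonempty (Cl (q + 2) p ≃ₐ[ℝ] Cl p q ⊗[ℝ] Matrix (Fin 2) (Fin 2) ℝ) := by
  refine nonempty_Cl_tensorProduct (i := !![1, 0; 0, -1]) (j := !![0, 1; 1, 0]) (a := 1)
    (b := 1) ?_ ?_ ?_ (by norm_num) (fun x => ⟨(x 0 0 + x 1 1) / 2, (x 0 0 - x 1 1) / 2,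
      (x 0 1 + x 1 0) / 2, (x 0 1 - x 1 0) / 2, ?_⟩) (by simp [Module.finrank_matrix])
    ((Equiv.sumCongr finSumFinEquiv.symm (Equiv.refl _)).trans
      ((Equiv.sumComm _ _).trans (Equiv.sumAssoc _ _ _).symm)) ?_
  · ext i j; fin_cases i <;> fin_cases j <;> simp
  · ext i j; fin_cases i <;> fin_cases j <;> simp
  · ext i j; fin_cases i <;> fin_cases j <;> simp
  · ext i j; fin_cases i <;> fin_cases j <;> simp <;> ring
  · rintro (x | x)
    · obtain ⟨x | x, rfl⟩ := finSumFinEquiv.surjective x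
      · simp
      · fin_cases x <;> simp
    · simp

theorem nonempty_Cl_add_two_right (p q : ℕ) :
    Nonempty (Cl q (p + 2) ≃ₐ[ℝ] Cl p q ⊗[ℝ] ℍ[ℝ]) := by
  obtain ⟨i, i0, i1, i2, i3⟩ : ∃ i : ℍ[ℝ], i.re = 0 ∧ i.imI = 1 ∧ i.imJ = 0 ∧ i.imK = 0 :=
    ⟨⟨0, 1, 0, 0⟩, rfl, rfl, rfl, rfl⟩
  obtain ⟨j, j0, j1, j2, j3⟩ : ∃ j : ℍ[ℝ], j.re = 0 ∧ j.imI = 0 ∧ j.imJ = 1 ∧ j.imK = 0 :=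
    ⟨⟨0, 0, 1, 0⟩, rfl, rfl, rfl, rfl⟩
  refine nonempty_Cl_tensorProduct (i := i) (j := j) (a := -1)
    (b := -1) ?_ ?_ ?_ (by norm_num) (fun x => ⟨x.re, x.imI, x.imJ, x.imK, ?_⟩)
    Quaternion.finrank_eq_four
    ((Equiv.sumCongr (Equiv.refl _) finSumFinEquiv.symm).trans
      ((Equiv.sumAssoc _ _ _).symm.trans (Equiv.sumCongr (Equiv.sumComm _ _) (Equiv.refl _)))) ?_
  · ext <;> simp [i0, i1, i2, i3]
  · ext <;> simp [j0, j1, j2, j3]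
  · ext <;> simp [i0, i1, i2, i3, j0, j1, j2, j3]
  · ext <;> simp [i0, i1, i2, i3, j0, j1, j2, j3]
  · rintro (x | x)
    · simp
    · obtain ⟨x | x, rfl⟩ := finSumFinEquiv.surjective x
      · simp
      · fin_cases x <;> simp

theorem nonempty_Cl_zero_zero : Nonempty (Cl 0 0 ≃ₐ[ℝ] ℝ) := by
  have h : Module.finrank ℝ ℝ = Module.finrank ℝ (Cl 0 0) := by simp [finrank_Cl]
  have hinj : Function.Injective (Algebra.ofId ℝ (Cl 0 0)) :=
    (algebraMap ℝ (CliffordAlgebra (Qpq 0 0))).injective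
  exact ⟨(AlgEquiv.ofBijective (Algebra.ofId ℝ (Cl 0 0))
    ⟨hinj, (LinearMap.injective_iff_surjective_of_finrank_eq_finrank
      (f := (Algebra.ofId ℝ (Cl 0 0)).toLinearMap) h).1 hinj⟩).symm⟩

theorem nonempty_Cl_zero_one : Nonempty (Cl 0 1 ≃ₐ[ℝ] ℂ) := by
  refine ⟨(CliffordAlgebra.equivOfIsometry (Q₂ := CliffordAlgebraComplex.Q)
    { LinearEquiv.funUnique (Fin 1) ℝ ℝ with map_app' := fun v => ?_ }).trans
      CliffordAlgebraComplex.equiv⟩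
  simp [Qpq, weightedSumSquares_apply]

/-- Full matrix algebras absorb a tensor factor through their coefficients. -/
theorem nonempty_matrix_tensorProduct {A K B K' : Type} [Ring A] [Ring K] [Ring B] [Ring K']
    [Algebra ℝ A] [Algebra ℝ K] [Algebra ℝ B] [Algebra ℝ K'] {m n l : ℕ}
    (hA : Nonempty (A ≃ₐ[ℝ] Matrix (Fin n) (Fin n) K))
    (h : Nonempty (K ⊗[ℝ] B ≃ₐ[ℝ] Matrix (Fin m) (Fin m) K')) (hl : n * m = l) :
    Nonempty (A ⊗[ℝ] B ≃ₐ[ℝ] Matrix (Fin l) (Fin l) K') := by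
  obtain ⟨f⟩ := hA
  obtain ⟨g⟩ := h
  subst hl
  exact ⟨(Algebra.TensorProduct.congr f (Matrix.uniqueAlgEquiv (m := Unit)).symm).trans <|
    (Matrix.kroneckerTMulAlgEquiv (Fin n) Unit ℝ ℝ K B).trans <| g.mapMatrix.trans <|
    (Matrix.compAlgEquiv (Fin n × Unit) (Fin m) K' ℝ).trans <|
    Matrix.reindexAlgEquiv ℝ K'
      ((Equiv.prodCongr (Equiv.prodPUnit _) (Equiv.refl _)).trans finProdFinEquiv)⟩

theorem nonempty_tensorProduct_matrix_two (K : Type) [Ring K] [Algebra ℝ K] :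
    Nonempty (K ⊗[ℝ] Matrix (Fin 2) (Fin 2) ℝ ≃ₐ[ℝ] Matrix (Fin 2) (Fin 2) K) :=
  ⟨(matrixEquivTensor (Fin 2) ℝ K).symm⟩

theorem nonempty_matrix_fin_one (K : Type) [Ring K] [Algebra ℝ K] :
    Nonempty (K ≃ₐ[ℝ] Matrix (Fin 1) (Fin 1) K) :=
  ⟨(Matrix.uniqueAlgEquiv (m := Unit)).symm.trans
    (Matrix.reindexAlgEquiv ℝ K (Equiv.ofUnique Unit (Fin 1)))⟩

theorem nonempty_real_tensorProduct_quaternion :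
    Nonempty (ℝ ⊗[ℝ] ℍ[ℝ] ≃ₐ[ℝ] Matrix (Fin 1) (Fin 1) ℍ[ℝ]) :=
  (nonempty_matrix_fin_one _).map (Algebra.TensorProduct.lid ℝ _).trans

theorem nonempty_complex_tensorProduct_quaternion :
    Nonempty (ℂ ⊗[ℝ] ℍ[ℝ] ≃ₐ[ℝ] Matrix (Fin 2) (Fin 2) ℂ) := by
  obtain ⟨c⟩ := nonempty_Cl_zero_one
  obtain ⟨f⟩ := nonempty_Cl_add_two_right 0 1
  obtain ⟨g⟩ := nonempty_Cl_succ_succ 0 1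
  obtain ⟨t⟩ := nonempty_tensorProduct_matrix_two ℂ
  exact ⟨(Algebra.TensorProduct.congr c.symm AlgEquiv.refl).trans <| f.symm.trans <| g.trans <|
    (Algebra.TensorProduct.congr c AlgEquiv.refl).trans t⟩

theorem nonempty_quaternion_tensorProduct_quaternion :
    Nonempty (ℍ[ℝ] ⊗[ℝ] ℍ[ℝ] ≃ₐ[ℝ] Matrix (Fin 4) (Fin 4) ℝ) := by
  obtain ⟨r⟩ := nonempty_Cl_zero_zero
  obtain ⟨f⟩ := nonempty_Cl_add_two_right 0 0
  obtain ⟨f'⟩ := nonempty_Cl_add_two_right 0 2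
  obtain ⟨g⟩ := nonempty_Cl_succ_succ 0 0
  obtain ⟨g'⟩ := nonempty_Cl_succ_succ 1 1
  obtain ⟨t⟩ := nonempty_tensorProduct_matrix_two ℝ
  obtain ⟨t'⟩ := nonempty_matrix_tensorProduct (l := 4)
    ⟨(g.trans (Algebra.TensorProduct.congr r AlgEquiv.refl)).trans t⟩
    (nonempty_tensorProduct_matrix_two ℝ) rfl
  have h : Cl 0 2 ≃ₐ[ℝ] ℍ[ℝ] := f.trans <|
    (Algebra.TensorProduct.congr r AlgEquiv.refl).trans (Algebra.TensorProduct.lid ℝ _)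
  exact ⟨(Algebra.TensorProduct.congr h.symm AlgEquiv.refl).trans <| f'.symm.trans <|
    g'.trans t'⟩

theorem two_mul_radonHurwitz (i : ℤ) :
    (i % 8 = 0 ∨ i % 8 = 6) ∧ 2 * radonHurwitz i = i ∨
    (i % 8 = 1 ∨ i % 8 = 3 ∨ i % 8 = 5) ∧ 2 * radonHurwitz i = i + 1 ∨
    (i % 8 = 2 ∨ i % 8 = 4) ∧ 2 * radonHurwitz i = i + 2 ∨
    i % 8 = 7 ∧ 2 * radonHurwitz i = i - 1 := by
  have h : i % 8 = 0 ∨ i % 8 = 1 ∨ i % 8 = 2 ∨ i % 8 = 3 ∨ i % 8 = 4 ∨ i % 8 = 5 ∨ i % 8 = 6 ∨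
    i % 8 = 7 := by omega
  unfold radonHurwitz
  rcases h with h | h | h | h | h | h | h | h <;> rw [h] <;> simp [rhBase] <;> omega

/-- `Cl_{p,q}` is the algebra of `2^k × 2^k` matrices prescribed by `p - q` modulo 8. -/
def IsMatrixModel (p q k : ℕ) : Prop :=
  (k : ℤ) = (q : ℤ) - radonHurwitz ((q : ℤ) - p) ∧
    (((p : ℤ) - q) % 8 = 0 ∨ ((p : ℤ) - q) % 8 = 2 →
      Nonempty (Cl p q ≃ₐ[ℝ] Matrix (Fin (2 ^ k)) (Fin (2 ^ k)) ℝ)) ∧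
    (((p : ℤ) - q) % 8 = 3 ∨ ((p : ℤ) - q) % 8 = 7 →
      Nonempty (Cl p q ≃ₐ[ℝ] Matrix (Fin (2 ^ k)) (Fin (2 ^ k)) ℂ)) ∧
    (((p : ℤ) - q) % 8 = 4 ∨ ((p : ℤ) - q) % 8 = 6 →
      Nonempty (Cl p q ≃ₐ[ℝ] Matrix (Fin (2 ^ k)) (Fin (2 ^ k)) (Quaternion ℝ)))

namespace IsMatrixModel

variable {p q k : ℕ}

theorem succ_succ (hM : IsMatrixModel p q k) : IsMatrixModel (p + 1) (q + 1) (k + 1) := by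
  obtain ⟨hk, hR, hC, hH⟩ := hM
  have hr : ((q + 1 : ℕ) : ℤ) - ((p + 1 : ℕ) : ℤ) = q - p := by push_cast; ring
  obtain ⟨e⟩ := nonempty_Cl_succ_succ p q
  refine ⟨by rw [hr]; omega, fun hd => ?_, fun hd => ?_, fun hd => ?_⟩
  · exact (nonempty_matrix_tensorProduct (hR (by omega))
      (nonempty_tensorProduct_matrix_two ℝ) rfl).map e.trans
  · exact (nonempty_matrix_tensorProduct (hC (by omega))
      (nonempty_tensorProduct_matrix_two ℂ) rfl).map e.trans
  · exact (nonempty_matrix_tensorProduct (hH (by omega))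
      (nonempty_tensorProduct_matrix_two ℍ[ℝ]) rfl).map e.trans

theorem add_two_left (hM : IsMatrixModel p q k) :
    IsMatrixModel (q + 2) p (k + 1) := by
  obtain ⟨hk, hR, hC, hH⟩ := hM
  have hr := two_mul_radonHurwitz ((q : ℤ) - p)
  have hr' := two_mul_radonHurwitz ((p : ℤ) - (q + 2 : ℕ))
  obtain ⟨e⟩ := nonempty_Cl_add_two_left p q
  refine ⟨by omega, fun hd => ?_, fun hd => ?_, fun hd => ?_⟩
  · exact (nonempty_matrix_tensorProduct (hR (by omega))
      (nonempty_tensorProduct_matrix_two ℝ) rfl).map e.trans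
  · exact (nonempty_matrix_tensorProduct (hC (by omega))
      (nonempty_tensorProduct_matrix_two ℂ) rfl).map e.trans
  · exact (nonempty_matrix_tensorProduct (hH (by omega))
      (nonempty_tensorProduct_matrix_two ℍ[ℝ]) rfl).map e.trans

theorem add_two_right (hM : IsMatrixModel p q k) :
    ∃ k', IsMatrixModel q (p + 2) k' := by
  obtain ⟨hk, hR, hC, hH⟩ := hM
  have hr := two_mul_radonHurwitz ((q : ℤ) - p)
  have hr' := two_mul_radonHurwitz (((p + 2 : ℕ) : ℤ) - q)
  obtain ⟨e⟩ := nonempty_Cl_add_two_right p q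
  have hnonneg : 0 ≤ ((p + 2 : ℕ) : ℤ) - radonHurwitz (((p + 2 : ℕ) : ℤ) - q) := by omega
  obtain ⟨k', hk'⟩ := Int.eq_ofNat_of_zero_le hnonneg
  refine ⟨k', hk'.symm, fun hd => ?_, fun hd => ?_, fun hd => ?_⟩
  · obtain rfl : k' = k + 2 := by omega
    exact (nonempty_matrix_tensorProduct (hH (by omega))
      nonempty_quaternion_tensorProduct_quaternion (by ring)).map e.trans
  · obtain rfl : k' = k + 1 := by omega
    exact (nonempty_matrix_tensorProduct (hC (by omega))
      nonempty_complex_tensorProduct_quaternion rfl).map e.trans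
  · obtain rfl : k' = k := by omega
    exact (nonempty_matrix_tensorProduct (hR (by omega))
      nonempty_real_tensorProduct_quaternion (mul_one _)).map e.trans

theorem zero_zero : IsMatrixModel 0 0 0 := by
  obtain ⟨e⟩ := nonempty_Cl_zero_zero
  refine ⟨by simp [radonHurwitz, rhBase], fun _ => ?_, fun hd => ?_, fun hd => ?_⟩
  · exact (nonempty_matrix_fin_one ℝ).map e.trans
  · simp at hd
  · simp at hd

theorem zero_one : IsMatrixModel 0 1 0 := by
  obtain ⟨e⟩ := nonempty_Cl_zero_one
  refine ⟨by simp [radonHurwitz, rhBase], fun hd => ?_, fun _ => ?_, fun hd => ?_⟩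
  · simp at hd
  · exact (nonempty_matrix_fin_one ℂ).map e.trans
  · simp at hd

end IsMatrixModel

theorem exists_isMatrixModel : ∀ p q : ℕ, ¬ ((p : ℤ) - q) % 4 = 1 → ∃ k, IsMatrixModel p q k
  | 0, 0, _ => ⟨0, .zero_zero⟩
  | 0, 1, _ => ⟨0, .zero_one⟩
  | 1, 0, h => absurd rfl h
  | p + 1, q + 1, h => by
    obtain ⟨k, hk⟩ := exists_isMatrixModel p q (by omega)
    exact ⟨_, hk.succ_succ⟩
  | p + 2, 0, h => by
    obtain ⟨k, hk⟩ := exists_isMatrixModel 0 p (by omega)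
    exact ⟨_, hk.add_two_left⟩
  | 0, q + 2, h => by
    obtain ⟨k, hk⟩ := exists_isMatrixModel q 0 (by omega)
    exact hk.add_two_right
  termination_by p q => p + q

/-- If `p - q ≢ 1 (mod 4)` then `Cl_{p,q}` is a simple algebra of dimension `2^{p+q}`
isomorphic to a full matrix algebra `Mat(2^k, 𝕂)`, `k = q - r_{q-p}`, where `𝕂` is `ℝ`,
`ℂ`, or `ℍ` according as `p - q ≡ 0,2`, `3,7`, or `4,6 (mod 8)`. -/
theorem clifford_simple_structure (p q : ℕ) (h : ¬ ((p : ℤ) - q) % 4 = 1) :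
    IsSimpleRing (Cl p q) ∧
    Module.finrank ℝ (Cl p q) = 2 ^ (p + q) ∧
    (∀ k : ℕ, (k : ℤ) = (q : ℤ) - radonHurwitz ((q : ℤ) - p) →
      ((((p : ℤ) - q) % 8 = 0 ∨ ((p : ℤ) - q) % 8 = 2 →
        Nonempty (Cl p q ≃ₐ[ℝ] Matrix (Fin (2 ^ k)) (Fin (2 ^ k)) ℝ)) ∧
      (((p : ℤ) - q) % 8 = 3 ∨ ((p : ℤ) - q) % 8 = 7 →
        Nonempty (Cl p q ≃ₐ[ℝ] Matrix (Fin (2 ^ k)) (Fin (2 ^ k)) ℂ)) ∧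
      (((p : ℤ) - q) % 8 = 4 ∨ ((p : ℤ) - q) % 8 = 6 →
        Nonempty (Cl p q ≃ₐ[ℝ] Matrix (Fin (2 ^ k)) (Fin (2 ^ k)) (Quaternion ℝ))))) := by
  obtain ⟨k, hk, hR, hC, hH⟩ := exists_isMatrixModel p q h
  refine ⟨?_, finrank_Cl p q, fun k' hk' => ?_⟩
  · have hd : (((p : ℤ) - q) % 8 = 0 ∨ ((p : ℤ) - q) % 8 = 2) ∨
        (((p : ℤ) - q) % 8 = 3 ∨ ((p : ℤ) - q) % 8 = 7) ∨
        (((p : ℤ) - q) % 8 = 4 ∨ ((p : ℤ) - q) % 8 = 6) := by omega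
    rcases hd with hd | hd | hd
    · obtain ⟨e⟩ := hR hd
      exact .of_ringEquiv e.symm.toRingEquiv inferInstance
    · obtain ⟨e⟩ := hC hd
      exact .of_ringEquiv e.symm.toRingEquiv inferInstance
    · obtain ⟨e⟩ := hH hd
      exact .of_ringEquiv e.symm.toRingEquiv inferInstance
  · obtain rfl : k' = k := by omega
    exact ⟨hR, hC, hH⟩

end
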